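/- Let H be a complex Hilbert space and let T be a bounded linear operator on H. Then T is centered (i.e. the operators in the family {T^n(T^n)* : n ≥ 1} ∪ {(T^n)*T^n : n ≥ 1} mutually commute) if and only if |T^n| commutes with |T*| for every n ≥ 1. -/

import Mathlib

set_option synthInstance.maxHeartbeats 1000000
set_option maxHeartbeats 1000000

open ContinuousLinearMap

/-- `opAbs T = |T| = (T*T)^(1/2)`, the positive square root of `T*T` obtained by the
continuous functional calculus. -/
noncomputable def opAbs {H : Type*} [NormedAddCommGroup H] [InnerProductSpace ℂ H]
    [CompleteSpace H] (T : H →L[ℂ] H) : H →L[ℂ] H :=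
  CFC.sqrt (adjoint T * T)

/-- An operator `T` is centered if the operators in the family
`{T^n (T^n)* : n ≥ 1} ∪ {(T^n)* T^n : n ≥ 1}` mutually commute. -/
def Centered {H : Type*} [NormedAddCommGroup H] [InnerProductSpace ℂ H]
    [CompleteSpace H] (T : H →L[ℂ] H) : Prop :=
  ∀ m n : ℕ, 1 ≤ m → 1 ≤ n →
    Commute (T ^ m * adjoint (T ^ m)) (T ^ n * adjoint (T ^ n)) ∧
    Commute (adjoint (T ^ m) * T ^ m) (adjoint (T ^ n) * T ^ n) ∧
    Commute (T ^ m * adjoint (T ^ m)) (adjoint (T ^ n) * T ^ n)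

theorem aux_key {R : Type*} [NonUnitalNormedRing R] [StarRing R] [CStarRing R]
    (A T Y Z : R) (hA : star A = A) (hc : A * (T * star T) = T * star T * A)
    (h : star T * (A * T * Y - T * Z) = 0) : A * T * Y - T * Z = 0 := by
  generalize hX : A * T * Y - T * Z = X at h
  have h1 : star T * A * X = 0 := by
    rw [← CStarRing.star_mul_self_eq_zero_iff]
    calc star (star T * A * X) * (star T * A * X)
        = star X * (A * (T * star T)) * A * X := by simp [hA, mul_assoc]
      _ = star X * (T * star T * A) * A * X := by rw [hc]
      _ = star (star T * X) * (star T * A * A * X) := by simp [mul_assoc]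
      _ = 0 := by rw [h]; simp
  rw [← CStarRing.star_mul_self_eq_zero_iff]
  calc star X * X = star Y * (star T * A * X) - star Z * (star T * X) := by
        nth_rewrite 1 [← hX]
        simp [hA, mul_assoc, sub_mul]
    _ = 0 := by rw [h1, h]; simp

theorem aux_main {R : Type*} [NormedRing R] [StarRing R] [CStarRing R] (T : R)
    (h : ∀ n : ℕ, Commute (star (T ^ n) * T ^ n) (T * star T)) (m n : ℕ) :
    Commute (T ^ m * star (T ^ m)) (T ^ n * star (T ^ n)) ∧
    Commute (star (T ^ m) * T ^ m) (star (T ^ n) * T ^ n) ∧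
    Commute (T ^ m * star (T ^ m)) (star (T ^ n) * T ^ n) := by
  obtain ⟨A, hAd⟩ : ∃ A : ℕ → R, ∀ n, A n = star (T ^ n) * T ^ n := ⟨_, fun _ => rfl⟩
  obtain ⟨B, hBd⟩ : ∃ B : ℕ → R, ∀ n, B n = T ^ n * star (T ^ n) := ⟨_, fun _ => rfl⟩
  simp only [← hAd, ← hBd] at h ⊢
  have A0 : A 0 = 1 := by simp [hAd]
  have B0 : B 0 = 1 := by simp [hBd]
  have As : ∀ n, A (n+1) = star T * A n * T := fun n => by
    rw [hAd, hAd, pow_succ]; simp only [star_mul, mul_assoc]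
  have Bs : ∀ n, B (n+1) = T * B n * star T := fun n => by
    rw [hBd, hBd, pow_succ']; simp only [star_mul, mul_assoc]
  have A1 : A 1 = star T * T := by simp [hAd]
  have Asa : ∀ n, star (A n) = A n := fun n => by simp [hAd]
  have Bsa : ∀ n, star (B n) = B n := fun n => by simp [hBd]
  have AA : ∀ m n, Commute (A m) (A n) := by
    intro m
    induction m with
    | zero => intro n; rw [A0]; exact Commute.one_left _
    | succ m ih =>
      intro n
      cases n with
      | zero => rw [A0]; exact Commute.one_right _
      | succ n =>
        have e : ∀ m n, A (m+1) * A (n+1) = star T * (T * star T) * (A m * A n) * T := by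
          intro m n
          calc A (m+1) * A (n+1) = star T * (A m * (T * star T)) * A n * T := by
                rw [As, As]; simp only [mul_assoc]
            _ = _ := by rw [(h m).eq]; simp only [mul_assoc]
        show _ = _
        rw [e, e, (ih n).eq]
  have BA : ∀ n m, Commute (B n) (A m) := by
    intro n
    induction n with
    | zero => intro n; rw [B0]; exact Commute.one_left _
    | succ n ih =>
      intro m
      have h1 : star T * (A m * T * (B n * star T * T) - T * (B n * star T * A m * T)) = 0 := by
        have : A (m+1) * B n * A 1 = A 1 * B n * A (m+1) := by
          rw [← (ih _).eq, mul_assoc, (AA _ _).eq, ← mul_assoc, (ih _).eq]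
        rw [As, A1] at this
        rw [mul_sub, sub_eq_zero]
        simpa only [mul_assoc] using this
      have h2 := aux_key _ _ _ _ (Asa m) (h m).eq h1
      have h3 : star T * (A m * T * (B n * star T) - T * (B n * star T * A m)) = 0 := by
        have := congrArg star h2
        simp only [star_sub, star_mul, Asa, Bsa, star_star, star_zero] at this
        rw [mul_sub, sub_eq_zero]
        rw [sub_eq_zero] at this
        simp only [mul_assoc] at this ⊢
        exact this.symm
      have h4 := aux_key _ _ _ _ (Asa m) (h m).eq h3
      rw [sub_eq_zero] at h4
      show _ = _
      rw [Bs]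
      simp only [mul_assoc] at h4 ⊢
      exact h4.symm
  have BB : ∀ m n, Commute (B m) (B n) := by
    intro m
    induction m with
    | zero => intro n; rw [B0]; exact Commute.one_left _
    | succ m ih =>
      intro n
      cases n with
      | zero => rw [B0]; exact Commute.one_right _
      | succ n =>
        have e : ∀ m n, B (m+1) * B (n+1) = T * A 1 * (B m * B n) * star T := by
          intro m n
          calc B (m+1) * B (n+1) = T * (B m * A 1) * B n * star T := by
                rw [Bs, Bs, A1]; simp only [mul_assoc]
            _ = _ := by rw [(BA m 1).eq]; simp only [mul_assoc]
        show _ = _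
        rw [e, e, (ih n).eq]
  exact ⟨BB m n, AA m n, BA m n⟩

theorem aux_nonneg {H : Type*} [NormedAddCommGroup H] [InnerProductSpace ℂ H]
    [CompleteSpace H] (T : H →L[ℂ] H) : 0 ≤ adjoint T * T :=
  star_mul_self_nonneg T

theorem aux_sq {H : Type*} [NormedAddCommGroup H] [InnerProductSpace ℂ H]
    [CompleteSpace H] (T : H →L[ℂ] H) : opAbs T * opAbs T = adjoint T * T :=
  CFC.sqrt_mul_sqrt_self _ (aux_nonneg T)

theorem aux_comm {H : Type*} [NormedAddCommGroup H] [InnerProductSpace ℂ H]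
    [CompleteSpace H] (S T : H →L[ℂ] H) :
    Commute (opAbs S) (opAbs T) ↔ Commute (adjoint S * S) (adjoint T * T) := by
  constructor
  · intro h
    rw [← aux_sq, ← aux_sq]
    exact (h.mul_left h).mul_right (h.mul_left h)
  · intro h
    have h1 : Commute (opAbs S) (adjoint T * T) := h.cfcₙ_nnreal _
    exact (h1.symm.cfcₙ_nnreal _).symm

/-- `T` is centered if and only if `|T^n|` commutes with `|T*|` for every `n ≥ 1`. -/
theorem stmt_16 {H : Type*} [NormedAddCommGroup H] [InnerProductSpace ℂ H] [CompleteSpace H]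
    (T : H →L[ℂ] H) :
    Centered T ↔
      ∀ n : ℕ, 1 ≤ n → Commute (opAbs (T ^ n)) (opAbs (adjoint T)) := by
  simp only [aux_comm, adjoint_adjoint]
  constructor
  · intro h n hn
    have := (h 1 n le_rfl hn).2.2.symm
    rwa [pow_one] at this
  · intro h m n _ _
    refine aux_main T (fun k => ?_) m n
    rcases Nat.eq_zero_or_pos k with rfl | hk
    · simp
    · exact h k hk
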